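/- Let n ≥ 1 and let x, y : Fin n → ℝ be injective functions such that x(i) + y(j) ≠ 0 for all i, j. Define the Cauchy matrix C : Matrix (Fin n) (Fin n) ℝ by C(i,j) = 1/(x(i) + y(j)). Then C is invertible and the sum of all entries of C⁻¹ equals (∑ᵢ x(i)) + (∑ⱼ y(j)). -/

import Mathlib

/-- A Cauchy matrix `C(i,j) = 1/(x i + y j)` with `x`, `y` injective and all pairwise
sums nonzero is invertible, and the sum of all entries of its inverse equals
`∑ x i + ∑ y j`. -/
theorem cauchy_matrix_inverse_entry_sum (n : ℕ) (hn : 1 ≤ n) (x y : Fin n → ℝ)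
    (hx : Function.Injective x) (hy : Function.Injective y)
    (hxy : ∀ i j, x i + y j ≠ 0) :
    IsUnit (Matrix.of (fun i j => 1 / (x i + y j)) : Matrix (Fin n) (Fin n) ℝ) ∧
      ∑ i, ∑ j, (Matrix.of (fun i j => 1 / (x i + y j)) : Matrix (Fin n) (Fin n) ℝ)⁻¹ i j =
        (∑ i, x i) + (∑ j, y j) := by
  set M : Matrix (Fin n) (Fin n) ℝ := Matrix.of (fun i j => 1 / (x i + y j)) with hM
  let v : Fin n → ℝ := fun j => - y j
  have hv : Set.InjOn v (Finset.univ : Finset (Fin n)) := fun a _ b _ h => hy (neg_injective h)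
  have hxv : ∀ i, ∀ j ∈ (Finset.univ : Finset (Fin n)), x i ≠ v j := by
    intro i j _ h
    apply hxy i j
    simp only [v] at h
    rw [h]; ring
  let w : Fin n → ℝ := Lagrange.nodalWeight Finset.univ v
  have hw : ∀ j, w j ≠ 0 := fun j => Lagrange.nodalWeight_ne_zero hv (Finset.mem_univ j)
  have key : ∀ (r : Fin n → ℝ) (i : Fin n),
      (Lagrange.interpolate Finset.univ v r).eval (x i) =
        (Lagrange.nodal Finset.univ v).eval (x i) * (M.mulVec (fun j => w j * r j)) i := by
    intro r i
    rw [Lagrange.eval_interpolate_not_at_node _ (hxv i)]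
    congr 1
    simp only [Matrix.mulVec, dotProduct, hM, Matrix.of_apply]
    refine Finset.sum_congr rfl fun j _ => ?_
    simp only [v, w, sub_neg_eq_add]
    ring
  have hU : IsUnit M := by
    rw [← Matrix.mulVec_injective_iff_isUnit]
    refine (injective_iff_map_eq_zero M.mulVecLin).2 ?_
    intro u hu
    have hu' : M.mulVec u = 0 := hu
    let r : Fin n → ℝ := fun j => u j / w j
    have hr : (fun j => w j * r j) = u := by
      funext j; simp only [r]; field_simp [hw j]
    have h0 : Lagrange.interpolate Finset.univ v r = 0 := by
      refine Polynomial.eq_zero_of_degree_lt_of_eval_index_eq_zero (s := Finset.univ) (v := x) hx.injOn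
        (Lagrange.degree_interpolate_lt r hv) ?_
      intro i _
      rw [key, hr, hu']; simp
    funext j
    have h1 := Lagrange.eval_interpolate_at_node r hv (Finset.mem_univ j)
    rw [h0] at h1
    rw [← hr]
    simp [← h1]
  refine ⟨hU, ?_⟩
  let q : Polynomial ℝ := Lagrange.nodal Finset.univ v - Lagrange.nodal Finset.univ x
  have hq : q.degree < (Finset.univ : Finset (Fin n)).card := by
    have := Polynomial.degree_sub_lt_left (p := Lagrange.nodal Finset.univ v)
      (q := Lagrange.nodal Finset.univ x) (by simp [Lagrange.degree_nodal])
      Lagrange.nodal_ne_zero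
      (by rw [Lagrange.nodal_monic.leadingCoeff, Lagrange.nodal_monic.leadingCoeff])
    rwa [Lagrange.degree_nodal] at this
  let b : Fin n → ℝ := fun j => w j * q.eval (v j)
  have hint := Lagrange.eq_interpolate hv hq
  have hb : M.mulVec b = 1 := by
    funext i
    have h := key (fun j => q.eval (v j)) i
    rw [← hint] at h
    have hne := Lagrange.eval_nodal_not_at_node (hxv i)
    have hqi : q.eval (x i) = (Lagrange.nodal Finset.univ v).eval (x i) := by
      simp only [q, Polynomial.eval_sub,
        Lagrange.eval_nodal_at_node (v := x) (Finset.mem_univ i), sub_zero]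
    rw [hqi] at h
    exact (mul_left_cancel₀ hne ((mul_one _).trans h)).symm
  have hb' : M⁻¹.mulVec 1 = b := by
    rw [← hb, Matrix.mulVec_mulVec, Matrix.nonsing_inv_mul _ ((Matrix.isUnit_iff_isUnit_det _).1 hU),
      Matrix.one_mulVec]
  have hs : ∑ i, ∑ j, M⁻¹ i j = ∑ i, b i := by
    refine Finset.sum_congr rfl fun i _ => ?_
    rw [← hb']; simp [Matrix.mulVec, dotProduct]
  rw [hs]
  have hc : q.coeff (n - 1) = ∑ i, x i + ∑ j, y j := by
    have h1 := Polynomial.prod_X_sub_C_coeff_card_pred (Finset.univ : Finset (Fin n)) v (by simp; omega)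
    have h2 := Polynomial.prod_X_sub_C_coeff_card_pred (Finset.univ : Finset (Fin n)) x (by simp; omega)
    simp only [Finset.card_univ, Fintype.card_fin] at h1 h2
    simp only [q, Polynomial.coeff_sub, Lagrange.nodal_eq, h1, h2, v, Finset.sum_neg_distrib]
    ring
  rw [← hc]
  have h := Lagrange.coeff_eq_sum hv hq
  simp only [Finset.card_univ, Fintype.card_fin] at h
  rw [h]
  refine Finset.sum_congr rfl fun j _ => ?_
  simp only [b, w, Lagrange.nodalWeight, Finset.prod_inv_distrib]
  rw [div_eq_mul_inv, mul_comm]
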